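/- arXiv:1912.03398 — 3 statements merged into one kernel-verified Lean document; each statement's English description precedes it below -/
import Mathlib

section
/- The finitely presented group on generators u, v with defining relations u^4 = v^4 = (uv)^2 = (u^2 v^2)^4 = 1 has order 2^7 = 128. -/
/-- The relators `u^4, v^4, (uv)^2, (u^2v^2)^4` on two generators `u, v`
(indexed `0, 1`). -/
def Vrels : Set (FreeGroup (Fin 2)) :=
  {(FreeGroup.of 0) ^ 4, (FreeGroup.of 1) ^ 4,
   (FreeGroup.of 0 * FreeGroup.of 1) ^ 2,
   ((FreeGroup.of 0) ^ 2 * (FreeGroup.of 1) ^ 2) ^ 4}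

/-! The group acts on the Gaussian integers modulo `n * (1 + i)`, with `n = 4`: `u` is the rotation
`z ↦ i z` and `v` is `z ↦ i z + 1`. Then `u v` and `v ^ 2` are point reflections, and
`u ^ 2 * v ^ 2` is the translation by `-(1 + i)`, whose order is `n`. Conversely, the relations say
precisely that `v * u⁻¹` and its conjugate by `u` commute, are permuted by `u` up to inversion as
`1` and `i` are by multiplication by `i`, and satisfy the relation expressing `n * (1 + i) = 0`.
Hence the group is `ℤ[i] / (n (1 + i)) ⋊ ⟨i⟩`, of order `2 n ^ 2 * 4`. -/

open Multiplicative
open Zsqrtd (sqrtd)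

section ZModPowers

variable {G : Type*} [Group G] {n : ℕ}

/-- The homomorphism from the cyclic group of order `n`, written as `Multiplicative (ZMod n)`,
sending the generator `ofAdd 1` to an element `g` with `g ^ n = 1`. -/
def zmodPowersHom (g : G) (hg : g ^ n = 1) : Multiplicative (ZMod n) →* G :=
  AddMonoidHom.toMultiplicativeLeft
    (ZMod.lift n ⟨zmultiplesHom (Additive G) (.ofMul g), by simp [← ofMul_pow, hg]⟩)

@[simp]
lemma zmodPowersHom_ofAdd_one (g : G) (hg : g ^ n = 1) :
    zmodPowersHom g hg (ofAdd 1) = g := by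
  have h : ((1 : ℤ) : ZMod n) = 1 := Int.cast_one
  rw [zmodPowersHom, AddMonoidHom.coe_toMultiplicativeLeft, Function.comp_apply,
    Function.comp_apply, toAdd_ofAdd, ← h, ZMod.lift_coe]
  simp

lemma exists_ofAdd_one_pow_eq [NeZero n] (k : Multiplicative (ZMod n)) :
    ∃ m : ℕ, ofAdd (1 : ZMod n) ^ m = k :=
  ⟨k.toAdd.val, by simp [← ofAdd_nsmul]⟩

lemma monoidHom_zmod_ext [NeZero n] {f g : Multiplicative (ZMod n) →* G}
    (h : f (ofAdd 1) = g (ofAdd 1)) : f = g := by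
  refine MonoidHom.ext fun k ↦ ?_
  obtain ⟨m, rfl⟩ := exists_ofAdd_one_pow_eq k
  rw [map_pow, map_pow, h]

lemma comp_eq_conj_zmodPowersHom_comp [NeZero n] {N : Type*} [Group N]
    {φ : Multiplicative (ZMod n) →* MulAut N} {f : N →* G} {g : G} (hg : g ^ n = 1)
    (h : ∀ a, f (φ (ofAdd 1) a) = g * f a * g⁻¹) (k : Multiplicative (ZMod n)) :
    f.comp (φ k).toMonoidHom = (MulAut.conj (zmodPowersHom g hg k)).toMonoidHom.comp f := by
  obtain ⟨m, rfl⟩ := exists_ofAdd_one_pow_eq k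
  ext a
  induction m with
  | zero => simp
  | succ m ih =>
    simp only [MonoidHom.comp_apply, MulEquiv.coe_toMonoidHom, map_pow,
      zmodPowersHom_ofAdd_one] at ih ⊢
    rw [pow_succ', MulAut.mul_apply, h, ih, pow_succ', MulAut.mul_apply, MulAut.conj_apply]

end ZModPowers

section Norm

/-- The basis `1, √d` of `ℤ√d` over `ℤ`. -/
noncomputable def zsqrtdBasis (d : ℤ) : Module.Basis (Fin 2) ℤ (ℤ√d) :=
  .ofEquivFun
    { toFun z := ![z.re, z.im]
      invFun c := ⟨c 0, c 1⟩
      map_add' _ _ := by simp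
      map_smul' _ _ := by simp
      left_inv _ := rfl
      right_inv c := by ext i; fin_cases i <;> rfl }

variable {d : ℤ}

lemma zsqrtdBasis_repr_apply (z : ℤ√d) : ⇑((zsqrtdBasis d).repr z) = ![z.re, z.im] := rfl

lemma zsqrtdBasis_zero : zsqrtdBasis d 0 = 1 := by
  rw [zsqrtdBasis, Module.Basis.coe_ofEquivFun]
  rfl

lemma zsqrtdBasis_one : zsqrtdBasis d 1 = sqrtd := by
  rw [zsqrtdBasis, Module.Basis.coe_ofEquivFun]
  rfl

lemma leftMulMatrix_zsqrtdBasis (z : ℤ√d) :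
    Algebra.leftMulMatrix (zsqrtdBasis d) z = !![z.re, d * z.im; z.im, z.re] := by
  ext i j
  rw [Algebra.leftMulMatrix_eq_repr_mul, zsqrtdBasis_repr_apply]
  fin_cases j <;> fin_cases i <;> simp [zsqrtdBasis_zero, zsqrtdBasis_one]

lemma algebraNorm_eq_zsqrtdNorm (z : ℤ√d) : Algebra.norm ℤ z = z.norm := by
  rw [Algebra.norm_eq_matrix_det (zsqrtdBasis d), leftMulMatrix_zsqrtdBasis,
    Matrix.det_fin_two_of, Zsqrtd.norm_def]

lemma card_quotient_span_singleton (z : GaussianInt) :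
    Nat.card (GaussianInt ⧸ Ideal.span {z}) = z.norm.natAbs := by
  have : Module.Free ℤ GaussianInt := .of_basis (zsqrtdBasis (-1))
  have : Module.Finite ℤ GaussianInt := .of_basis (zsqrtdBasis (-1))
  rw [← algebraNorm_eq_zsqrtdNorm, ← Ideal.absNorm_span_singleton, Ideal.absNorm_apply,
    Submodule.cardQuot_apply]

end Norm

section GaussianPowers

variable {G : Type*} [Group G]

/-- The homomorphism `a + b i ↦ x ^ a * y ^ b` from the additive group of Gaussian integers
defined by two commuting elements `x` and `y`. -/
def gaussianPowersHom (x y : G) (h : Commute x y) : Multiplicative GaussianInt →* G where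
  toFun z := x ^ z.toAdd.re * y ^ z.toAdd.im
  map_one' := by simp
  map_mul' z w := by
    simp only [toAdd_mul, Zsqrtd.re_add, Zsqrtd.im_add, zpow_add]
    exact ((h.zpow_zpow w.toAdd.re z.toAdd.im).symm.mul_mul_mul_comm _ _).symm

lemma gaussianPowersHom_apply {x y : G} (h : Commute x y) (z : GaussianInt) :
    gaussianPowersHom x y h (ofAdd z) = x ^ z.re * y ^ z.im :=
  rfl

lemma monoidHom_gaussianInt_ext {f g : Multiplicative GaussianInt →* G}
    (h_one : f (ofAdd 1) = g (ofAdd 1)) (h_sqrtd : f (ofAdd sqrtd) = g (ofAdd sqrtd)) : f = g := by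
  refine MonoidHom.ext fun z ↦ ?_
  have hz : z = ofAdd 1 ^ z.toAdd.re * ofAdd sqrtd ^ z.toAdd.im := by
    apply toAdd.injective
    ext <;> simp
  rw [hz]
  simp only [map_mul, map_zpow, h_one, h_sqrtd]

end GaussianPowers

/-- The Gaussian integer `i`, as a unit. -/
def gaussianI : GaussianIntˣ where
  val := sqrtd
  inv := -sqrtd
  val_inv := by decide
  inv_val := by decide

lemma gaussianI_pow_four : gaussianI ^ 4 = 1 := by decide

/-- The action of the cyclic group of order `4` on a module over the Gaussian integers in which the
generator is multiplication by `i`. -/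
def rotationAction (A : Type*) [AddCommGroup A] [Module GaussianInt A] :
    Multiplicative (ZMod 4) →* MulAut (Multiplicative A) :=
  (MulAutMultiplicative A).symm.toMonoidHom.comp
    ((DistribMulAction.toAddAut GaussianIntˣ A).comp
      (zmodPowersHom gaussianI gaussianI_pow_four))

lemma rotationAction_ofAdd_one {A : Type*} [AddCommGroup A] [Module GaussianInt A] (a : A) :
    rotationAction A (ofAdd 1) (ofAdd a) = ofAdd ((sqrtd : GaussianInt) • a) := by
  simp only [rotationAction, MonoidHom.comp_apply, zmodPowersHom_ofAdd_one]
  rfl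

/-- The group of maps `z ↦ i ^ k z + a` of a module `A` over the Gaussian integers, encoded as a
semidirect product; `k` is remembered modulo `4` even if multiplication by `i` has smaller order
on `A`. -/
abbrev GaussianAffineGroup (A : Type*) [AddCommGroup A] [Module GaussianInt A] : Type _ :=
  Multiplicative A ⋊[rotationAction A] Multiplicative (ZMod 4)

namespace GaussianAffineGroup

section Module

variable {A : Type*} [AddCommGroup A] [Module GaussianInt A]

/-- The translation `z ↦ z + a`, multiplicative in `a`. -/
def translation : Multiplicative A →* GaussianAffineGroup A := SemidirectProduct.inl

variable (A) in
/-- The map `z ↦ i z`. -/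
def quarterTurn : GaussianAffineGroup A := SemidirectProduct.inr (ofAdd 1)

lemma quarterTurn_pow_four : quarterTurn A ^ 4 = 1 := by
  have four_nsmul_one : (4 • 1 : ZMod 4) = 0 := by decide
  rw [quarterTurn, ← map_pow, ← ofAdd_nsmul, four_nsmul_one, ofAdd_zero, map_one]

lemma quarterTurn_conj_translation (a : A) :
    quarterTurn A * translation (ofAdd a) * (quarterTurn A)⁻¹ =
      translation (ofAdd ((sqrtd : GaussianInt) • a)) := by
  rw [quarterTurn, translation, ← map_inv, ← SemidirectProduct.inl_aut, rotationAction_ofAdd_one]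

lemma quarterTurn_mul_translation (a : A) :
    quarterTurn A * translation (ofAdd a) =
      translation (ofAdd ((sqrtd : GaussianInt) • a)) * quarterTurn A := by
  rw [← quarterTurn_conj_translation, inv_mul_cancel_right]

lemma quarterTurn_sq_mul_translation (a : A) :
    quarterTurn A ^ 2 * translation (ofAdd a) = translation (ofAdd (-a)) * quarterTurn A ^ 2 := by
  have sqrtd_smul_sqrtd_smul : (sqrtd : GaussianInt) • (sqrtd : GaussianInt) • a = -a := by
    rw [smul_smul, Zsqrtd.dmuld, Int.cast_neg, Int.cast_one, neg_one_smul]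
  rw [pow_two, mul_assoc, quarterTurn_mul_translation, ← mul_assoc, quarterTurn_mul_translation,
    sqrtd_smul_sqrtd_smul, mul_assoc]

lemma translation_mul_quarterTurn_sq_sq (a : A) :
    (translation (ofAdd a) * quarterTurn A ^ 2) ^ 2 = 1 := by
  rw [pow_two, mul_assoc, ← mul_assoc (quarterTurn A ^ 2), quarterTurn_sq_mul_translation,
    mul_assoc, ← pow_add, quarterTurn_pow_four, mul_one, ← map_mul, ← ofAdd_add, add_neg_cancel,
    ofAdd_zero, map_one]

lemma quarterTurn_mul_translation_mul_quarterTurn_sq (a : A) :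
    (quarterTurn A * (translation (ofAdd a) * quarterTurn A)) ^ 2 = 1 := by
  rw [← mul_assoc, quarterTurn_mul_translation, mul_assoc, ← pow_two,
    translation_mul_quarterTurn_sq_sq]

lemma translation_mul_quarterTurn_sq (a : A) :
    (translation (ofAdd a) * quarterTurn A) ^ 2 =
      translation (ofAdd ((1 + sqrtd : GaussianInt) • a)) * quarterTurn A ^ 2 := by
  rw [pow_two, mul_assoc, ← mul_assoc (quarterTurn A), quarterTurn_mul_translation, mul_assoc,
    ← mul_assoc, ← map_mul, ← ofAdd_add, ← pow_two, add_smul, one_smul]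

lemma translation_mul_quarterTurn_pow_four (a : A) :
    (translation (ofAdd a) * quarterTurn A) ^ 4 = 1 := by
  rw [pow_mul _ 2 2, translation_mul_quarterTurn_sq, translation_mul_quarterTurn_sq_sq]

lemma quarterTurn_sq_mul_translation_mul_quarterTurn_sq (a : A) :
    quarterTurn A ^ 2 * (translation (ofAdd a) * quarterTurn A) ^ 2 =
      translation (ofAdd (-((1 + sqrtd : GaussianInt) • a))) := by
  rw [translation_mul_quarterTurn_sq, ← mul_assoc, quarterTurn_sq_mul_translation, mul_assoc,
    ← pow_add, quarterTurn_pow_four, mul_one]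

end Module

section Quotient

variable {G : Type*} [Group G]

lemma hom_ext {I : Ideal GaussianInt} {f g : GaussianAffineGroup (GaussianInt ⧸ I) →* G}
    (h_translation : f (translation (ofAdd 1)) = g (translation (ofAdd 1)))
    (h_quarterTurn : f (quarterTurn _) = g (quarterTurn _)) : f = g := by
  refine SemidirectProduct.hom_ext ?_ (monoidHom_zmod_ext h_quarterTurn)
  let quotientHom : Multiplicative GaussianInt →* Multiplicative (GaussianInt ⧸ I) :=
    AddMonoidHom.toMultiplicative (Ideal.Quotient.mk I).toAddMonoidHom
  have quotientHom_surjective : Function.Surjective quotientHom :=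
    fun a ↦ Ideal.Quotient.mk_surjective a.toAdd
  rw [← MonoidHom.cancel_right (g₁ := f.comp _) quotientHom_surjective]
  refine monoidHom_gaussianInt_ext h_translation ?_
  have h_conj : translation (quotientHom (ofAdd sqrtd)) =
      quarterTurn _ * translation (ofAdd 1) * (quarterTurn _)⁻¹ := by
    rw [quarterTurn_conj_translation, Algebra.smul_def, mul_one]
    rfl
  change f (translation (quotientHom (ofAdd sqrtd))) = g (translation (quotientHom (ofAdd sqrtd)))
  simp only [h_conj, map_mul, map_inv, h_translation, h_quarterTurn]

variable {u x : G} (hu : u ^ 4 = 1) (hinv : u ^ 2 * x * (u ^ 2)⁻¹ = x⁻¹)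
  (hcomm : Commute x (u * x * u⁻¹)) {c : GaussianInt}
  (hc : gaussianPowersHom x (u * x * u⁻¹) hcomm (ofAdd c) = 1)

include hinv in
lemma gaussianPowersHom_sqrtd_mul (z : GaussianInt) :
    gaussianPowersHom x (u * x * u⁻¹) hcomm (ofAdd (sqrtd * z)) =
      u * gaussianPowersHom x (u * x * u⁻¹) hcomm (ofAdd z) * u⁻¹ := by
  let f := gaussianPowersHom x (u * x * u⁻¹) hcomm
  have h : f.comp (AddMonoidHom.mulLeft (sqrtd : GaussianInt)).toMultiplicative =
      (MulAut.conj u).toMonoidHom.comp f := by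
    apply monoidHom_gaussianInt_ext
    · simp [f, gaussianPowersHom_apply]
    · have h_conj_conj : x⁻¹ = u * (u * x * u⁻¹) * u⁻¹ := by rw [← hinv, pow_two]; group
      simpa [f, gaussianPowersHom_apply] using h_conj_conj
  exact DFunLike.congr_fun h (ofAdd z)

include hinv hc in
lemma gaussianPowersHom_mul_eq_one (z : GaussianInt) :
    gaussianPowersHom x (u * x * u⁻¹) hcomm (ofAdd (z * c)) = 1 := by
  let f := gaussianPowersHom x (u * x * u⁻¹) hcomm
  have h : f.comp (AddMonoidHom.mulRight c).toMultiplicative = 1 := by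
    apply monoidHom_gaussianInt_ext
    · simpa using hc
    · simp [f, gaussianPowersHom_sqrtd_mul hinv, hc]
  exact DFunLike.congr_fun h (ofAdd z)

/-- The homomorphism `a + b i ↦ x ^ a * (u * x * u⁻¹) ^ b`, descended to the quotient by `c`. -/
def translationLift : Multiplicative (GaussianInt ⧸ Ideal.span {c}) →* G :=
  AddMonoidHom.toMultiplicativeLeft <|
    QuotientAddGroup.lift (Ideal.span {c}).toAddSubgroup
      (MonoidHom.toAdditiveRight (gaussianPowersHom x (u * x * u⁻¹) hcomm)) <| by
        intro z hz
        obtain ⟨w, rfl⟩ := Ideal.mem_span_singleton'.mp hz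
        exact gaussianPowersHom_mul_eq_one hinv hcomm hc w

lemma translationLift_mk (z : GaussianInt) :
    translationLift hinv hcomm hc (ofAdd (Ideal.Quotient.mk _ z)) =
      gaussianPowersHom x (u * x * u⁻¹) hcomm (ofAdd z) :=
  rfl

lemma translationLift_one :
    translationLift hinv hcomm hc (ofAdd 1) = x := by
  rw [← map_one (Ideal.Quotient.mk _), translationLift_mk]
  simp [gaussianPowersHom_apply]

lemma translationLift_rotationAction_ofAdd_one
    (a : Multiplicative (GaussianInt ⧸ Ideal.span {c})) :
    translationLift hinv hcomm hc (rotationAction _ (ofAdd 1) a) =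
      u * translationLift hinv hcomm hc a * u⁻¹ := by
  obtain ⟨z, hz⟩ := Ideal.Quotient.mk_surjective a.toAdd
  obtain rfl : ofAdd (Ideal.Quotient.mk _ z) = a := hz
  have h_mk : (sqrtd : GaussianInt) • Ideal.Quotient.mk (Ideal.span {c}) z =
      Ideal.Quotient.mk _ (sqrtd * z) := rfl
  rw [rotationAction_ofAdd_one, h_mk, translationLift_mk, translationLift_mk,
    gaussianPowersHom_sqrtd_mul hinv]

/-- The homomorphism sending `quarterTurn` to `u` and the translation by `1` to `x`. -/
def lift : GaussianAffineGroup (GaussianInt ⧸ Ideal.span {c}) →* G :=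
  SemidirectProduct.lift (translationLift hinv hcomm hc) (zmodPowersHom u hu)
    (comp_eq_conj_zmodPowersHom_comp hu (translationLift_rotationAction_ofAdd_one hinv hcomm hc))

lemma lift_translation_one : lift hu hinv hcomm hc (translation (ofAdd 1)) = x := by
  rw [lift, translation, SemidirectProduct.lift_inl, translationLift_one]

lemma lift_quarterTurn : lift hu hinv hcomm hc (quarterTurn _) = u := by
  rw [lift, quarterTurn, SemidirectProduct.lift_inr, zmodPowersHom_ofAdd_one]

end Quotient

end GaussianAffineGroup

/-- The relators of `Vrels` with the last exponent `4` replaced by `n`. -/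
def relators (n : ℕ) : Set (FreeGroup (Fin 2)) :=
  {(FreeGroup.of 0) ^ 4, (FreeGroup.of 1) ^ 4,
   (FreeGroup.of 0 * FreeGroup.of 1) ^ 2,
   ((FreeGroup.of 0) ^ 2 * (FreeGroup.of 1) ^ 2) ^ n}

section Relations

variable {G : Type*} [Group G] {u v : G}

lemma sq_eq_inv_sq (hu : u ^ 4 = 1) : u ^ 2 = (u ^ 2)⁻¹ := by
  rw [eq_inv_iff_mul_eq_one, ← pow_add, hu]

lemma mul_eq_inv_mul_inv (huv : (u * v) ^ 2 = 1) : u * v = v⁻¹ * u⁻¹ := by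
  rw [← mul_inv_rev, eq_inv_iff_mul_eq_one, ← pow_two, huv]

lemma sq_conj_mul_inv (hu : u ^ 4 = 1) (huv : (u * v) ^ 2 = 1) :
    u ^ 2 * (v * u⁻¹) * (u ^ 2)⁻¹ = (v * u⁻¹)⁻¹ :=
  calc
    u ^ 2 * (v * u⁻¹) * (u ^ 2)⁻¹ = u ^ 2 * (v * u⁻¹) * u ^ 2 := by rw [← sq_eq_inv_sq hu]
    _ = u * (u * v) * u := by rw [pow_two]; group
    _ = (v * u⁻¹)⁻¹ := by rw [mul_eq_inv_mul_inv huv]; group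

lemma mul_inv_mul_conj : v * u⁻¹ * (u * (v * u⁻¹) * u⁻¹) = v ^ 2 * (u ^ 2)⁻¹ := by
  simp only [pow_two]
  group

lemma commute_mul_inv_conj (hu : u ^ 4 = 1) (hv : v ^ 4 = 1) (huv : (u * v) ^ 2 = 1) :
    Commute (v * u⁻¹) (u * (v * u⁻¹) * u⁻¹) := by
  refine Eq.symm ?_
  calc
    u * (v * u⁻¹) * u⁻¹ * (v * u⁻¹) = u * v * (u ^ 2)⁻¹ * v * u⁻¹ := by group
    _ = v⁻¹ * u⁻¹ * u ^ 2 * v * u⁻¹ := by rw [mul_eq_inv_mul_inv huv, ← sq_eq_inv_sq hu]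
    _ = v⁻¹ * (u * v) * u⁻¹ := by group
    _ = (v ^ 2)⁻¹ * (u ^ 2)⁻¹ := by rw [mul_eq_inv_mul_inv huv]; group
    _ = v ^ 2 * (u ^ 2)⁻¹ := by rw [← sq_eq_inv_sq hv]
    _ = v * u⁻¹ * (u * (v * u⁻¹) * u⁻¹) := mul_inv_mul_conj.symm

lemma gaussianPowersHom_mul_one_add_sqrtd {x y : G} (h : Commute x y) (n : ℕ) :
    gaussianPowersHom x y h (ofAdd ((n : GaussianInt) * (1 + sqrtd))) = (x * y) ^ n := by
  simp [gaussianPowersHom_apply, h.mul_pow]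

lemma mul_inv_mul_conj_pow {n : ℕ} (hu : u ^ 4 = 1) (hn : (u ^ 2 * v ^ 2) ^ n = 1) :
    (v * u⁻¹ * (u * (v * u⁻¹) * u⁻¹)) ^ n = 1 :=
  calc
    (v * u⁻¹ * (u * (v * u⁻¹) * u⁻¹)) ^ n = (v ^ 2 * u ^ 2) ^ n := by
      rw [mul_inv_mul_conj, ← sq_eq_inv_sq hu]
    _ = ((u ^ 2)⁻¹ * (u ^ 2 * v ^ 2) * (u ^ 2)⁻¹⁻¹) ^ n := by group
    _ = 1 := by rw [conj_pow, hn, mul_one, mul_inv_cancel]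

end Relations

/-- The quotient of the triangle group `⟨u, v | u^4 = v^4 = (uv)^2 = 1⟩` by the `n`-th power of its
translation `u^2 v^2`. -/
abbrev TriangleQuotient (n : ℕ) : Type := PresentedGroup (relators n)

/-- The Gaussian integers modulo `n * (1 + i)`. -/
abbrev GaussianQuotient (n : ℕ) : Type := GaussianInt ⧸ Ideal.span {n * (1 + sqrtd : GaussianInt)}

lemma card_gaussianQuotient (n : ℕ) : Nat.card (GaussianQuotient n) = 2 * n ^ 2 := by
  have norm_one_add_sqrtd : (1 + sqrtd : GaussianInt).norm = 2 := by decide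
  have h_norm : Zsqrtd.norm ((n : GaussianInt) * (1 + sqrtd)) = 2 * (n : ℤ) ^ 2 := by
    rw [Zsqrtd.norm_mul, Zsqrtd.norm_natCast, norm_one_add_sqrtd]
    ring
  rw [card_quotient_span_singleton, h_norm]
  simp [Int.natAbs_mul, Int.natAbs_pow]

namespace TriangleQuotient

variable {n : ℕ}

/-- The generator `u` of the presentation, indexed by `0`. -/
def u : TriangleQuotient n := PresentedGroup.of 0

/-- The generator `v` of the presentation, indexed by `1`. -/
def v : TriangleQuotient n := PresentedGroup.of 1

lemma u_pow_four : (u : TriangleQuotient n) ^ 4 = 1 :=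
  PresentedGroup.one_of_mem (x := .of 0 ^ 4) (by simp [relators])

lemma v_pow_four : (v : TriangleQuotient n) ^ 4 = 1 :=
  PresentedGroup.one_of_mem (x := .of 1 ^ 4) (by simp [relators])

lemma u_mul_v_sq : (u * v : TriangleQuotient n) ^ 2 = 1 :=
  PresentedGroup.one_of_mem (x := (.of 0 * .of 1) ^ 2) (by simp [relators])

lemma u_sq_mul_v_sq_pow : (u ^ 2 * v ^ 2 : TriangleQuotient n) ^ n = 1 :=
  PresentedGroup.one_of_mem (x := (.of 0 ^ 2 * .of 1 ^ 2) ^ n) (by simp [relators])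

lemma hom_ext {G : Type*} [Group G] {f g : TriangleQuotient n →* G}
    (h_u : f u = g u) (h_v : f v = g v) : f = g :=
  PresentedGroup.ext (Fin.forall_fin_two.mpr ⟨h_u, h_v⟩)

open GaussianAffineGroup (quarterTurn translation)

lemma lift_relator_eq_one {r : FreeGroup (Fin 2)} (hr : r ∈ relators n) :
    FreeGroup.lift ![quarterTurn (GaussianQuotient n), translation (ofAdd 1) * quarterTurn _] r =
      1 := by
  rcases hr with rfl | rfl | rfl | rfl
  · simpa using GaussianAffineGroup.quarterTurn_pow_four
  · simpa using GaussianAffineGroup.translation_mul_quarterTurn_pow_four _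
  · simpa using GaussianAffineGroup.quarterTurn_mul_translation_mul_quarterTurn_sq _
  · have h_zero : n • (1 + sqrtd : GaussianInt) • (1 : GaussianQuotient n) = 0 := by
      rw [nsmul_eq_mul, Algebra.smul_def, mul_one]
      exact Ideal.Quotient.eq_zero_iff_mem.mpr (Ideal.mem_span_singleton_self _)
    simp only [map_pow, map_mul, FreeGroup.lift_apply_of, Matrix.cons_val_zero, Matrix.cons_val_one,
      GaussianAffineGroup.quarterTurn_sq_mul_translation_mul_quarterTurn_sq]
    rw [← map_pow, ← ofAdd_nsmul, smul_neg, h_zero, neg_zero, ofAdd_zero, map_one]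

/-- The homomorphism sending `u` to `z ↦ i z` and `v` to `z ↦ i z + 1`. -/
def toAffine (n : ℕ) : TriangleQuotient n →* GaussianAffineGroup (GaussianQuotient n) :=
  PresentedGroup.toGroup fun _ ↦ lift_relator_eq_one

lemma toAffine_u : toAffine n u = quarterTurn _ := PresentedGroup.toGroup.of _

lemma toAffine_v : toAffine n v = translation (ofAdd 1) * quarterTurn _ :=
  PresentedGroup.toGroup.of _

/-- The homomorphism sending `z ↦ i z` to `u` and `z ↦ z + 1` to `v * u⁻¹`. -/
def ofAffine (n : ℕ) : GaussianAffineGroup (GaussianQuotient n) →* TriangleQuotient n :=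
  GaussianAffineGroup.lift u_pow_four (sq_conj_mul_inv u_pow_four u_mul_v_sq)
    (commute_mul_inv_conj u_pow_four v_pow_four u_mul_v_sq) <| by
      rw [gaussianPowersHom_mul_one_add_sqrtd,
        mul_inv_mul_conj_pow u_pow_four u_sq_mul_v_sq_pow]

lemma ofAffine_quarterTurn : ofAffine n (quarterTurn _) = u :=
  GaussianAffineGroup.lift_quarterTurn _ _ _ _

lemma ofAffine_translation_one : ofAffine n (translation (ofAdd 1)) = v * u⁻¹ :=
  GaussianAffineGroup.lift_translation_one _ _ _ _

lemma ofAffine_comp_toAffine : (ofAffine n).comp (toAffine n) = .id _ := by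
  apply hom_ext
  · simp [toAffine_u, ofAffine_quarterTurn]
  · simp [toAffine_v, ofAffine_quarterTurn, ofAffine_translation_one]

lemma toAffine_comp_ofAffine : (toAffine n).comp (ofAffine n) = .id _ := by
  apply GaussianAffineGroup.hom_ext
  · simp [ofAffine_translation_one, toAffine_u, toAffine_v]
  · simp [ofAffine_quarterTurn, toAffine_u]

/-- The identification of the presented group with a group of affine maps. -/
def equivAffine (n : ℕ) : TriangleQuotient n ≃* GaussianAffineGroup (GaussianQuotient n) :=
  (toAffine n).toMulEquiv (ofAffine n) ofAffine_comp_toAffine toAffine_comp_ofAffine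

end TriangleQuotient

theorem presented_group_order_128_general {n : ℕ} (hn : n ≠ 0) :
    Finite (PresentedGroup (relators n)) ∧ Nat.card (PresentedGroup (relators n)) = 8 * n ^ 2 := by
  have h_card : Nat.card (PresentedGroup (relators n)) = 8 * n ^ 2 := by
    rw [Nat.card_congr (TriangleQuotient.equivAffine n).toEquiv, SemidirectProduct.card,
      Nat.card_congr toAdd, card_gaussianQuotient, Nat.card_congr toAdd, Nat.card_zmod]
    ring
  exact ⟨Nat.finite_of_card_ne_zero (h_card ▸ by positivity), h_card⟩

/-- The finitely presented group `⟨u, v | u^4 = v^4 = (uv)^2 = (u^2v^2)^4 = 1⟩`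
has order `2^7 = 128`. -/
theorem presented_group_order_128 : Nat.card (PresentedGroup Vrels) = 128 :=
  (presented_group_order_128_general four_ne_zero).2
end

section
/- For every positive integer m, there is no group automorphism ρ of G_m = U/N_m such that ρ(ā) = ā^{-1}, ρ(b̄) = ā^2 b̄, and ρ(c̄) = c̄, where ā, b̄, c̄ denote the images of a, b, c in G_m. (This expresses the chirality of the polytope P_m whose rotation group is G_m.) -/
/-- The defining relators of the group `U` on generators `a, b, c` (indexed `0, 1, 2`):
`a^4, b^4, c^4, (ab)^2, (bc)^2, (abc)^2, (a^2b^2)^4, a^2c^2b^2(ac)^2, [a,c⁻¹]b^2`,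
where `[x,y] = x⁻¹y⁻¹xy`. -/
def Urels : Set (FreeGroup (Fin 3)) :=
  {(FreeGroup.of 0) ^ 4, (FreeGroup.of 1) ^ 4, (FreeGroup.of 2) ^ 4,
   (FreeGroup.of 0 * FreeGroup.of 1) ^ 2,
   (FreeGroup.of 1 * FreeGroup.of 2) ^ 2,
   (FreeGroup.of 0 * FreeGroup.of 1 * FreeGroup.of 2) ^ 2,
   ((FreeGroup.of 0) ^ 2 * (FreeGroup.of 1) ^ 2) ^ 4,
   (FreeGroup.of 0) ^ 2 * (FreeGroup.of 2) ^ 2 * (FreeGroup.of 1) ^ 2 *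
     (FreeGroup.of 0 * FreeGroup.of 2) ^ 2,
   (FreeGroup.of 0)⁻¹ * FreeGroup.of 2 * FreeGroup.of 0 * (FreeGroup.of 2)⁻¹ *
     (FreeGroup.of 1) ^ 2}

/-- The finitely presented group `U`. -/
abbrev UGroup : Type := PresentedGroup Urels

/-- The generator `a` of `U`. -/
def Ua : UGroup := PresentedGroup.of 0

/-- The generator `b` of `U`. -/
def Ub : UGroup := PresentedGroup.of 1

/-- The generator `c` of `U`. -/
def Uc : UGroup := PresentedGroup.of 2

/-- The element `x = (ac⁻¹)^4` of `U`. -/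
def Ux : UGroup := (Ua * Uc⁻¹) ^ 4

/-- The element `y = (c⁻¹a)^4` of `U`. -/
def Uy : UGroup := (Uc⁻¹ * Ua) ^ 4

/-- The subgroup `N_m = ⟨x^m, y^m⟩` of `U`. -/
def UN (m : ℕ) : Subgroup UGroup := Subgroup.closure {Ux ^ m, Uy ^ m}

/-!
The eighth defining relator `a²c²b²(ac)²` detects chirality: the assignment `a ↦ a⁻¹`, `b ↦
a²b`, `c ↦ c` turns it into the word `a⁻²c²(a²b)²(a⁻¹c)²`, which is not a relation of `G_m`. To
see this, let `U` act on six bits through `G_1`, that is, with `x` and `y` acting trivially, so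
that the action descends to every `G_m`. The generators act on the first five bits by affine
maps and add to the last bit a quadratic function of the others; the mirrored word flips
precisely that last bit.
-/

/-- The set of 64 points on which `U` acts, encoded as six bits so that the generators are given by
polynomials over `ZMod 2`. -/
abbrev SixBits : Type := ZMod 2 × ZMod 2 × ZMod 2 × ZMod 2 × ZMod 2 × ZMod 2

/-- The permutation by which the generator `a` acts on six bits. -/
def permA : Equiv.Perm SixBits where
  toFun := fun (p, q, r, s, t, u) => (p + 1, p + q + 1, r, s, t, u + (q + 1) * t)
  invFun := fun (p, q, r, s, t, u) => (p + 1, p + q, r, s, t, u + (p + q + 1) * t)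
  left_inv := fun v => by revert v; decide +kernel
  right_inv := fun v => by revert v; decide +kernel

/-- The permutation by which the generator `b` acts on six bits. -/
def permB : Equiv.Perm SixBits where
  toFun := fun (p, q, r, s, t, u) => (p + 1, p + q, p + r, s, p + q + t, u)
  invFun := fun (p, q, r, s, t, u) => (p + 1, p + q + 1, p + r + 1, s, q + t, u)
  left_inv := fun v => by revert v; decide +kernel
  right_inv := fun v => by revert v; decide +kernel

/-- The permutation by which the generator `c` acts on six bits. -/
def permC : Equiv.Perm SixBits where
  toFun := fun (p, q, r, s, t, u) => (p, p + q, p + r, r + s, q + t, u + (r + 1) * s + q * t)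
  invFun := fun (p, q, r, s, t, u) => (p, p + q, p + r, p + r + s, p + q + t,
    u + (p + r + 1) * (p + r + s) + (p + q) * (p + q + t))
  left_inv := fun v => by revert v; decide +kernel
  right_inv := fun v => by revert v; decide +kernel

theorem lift_perm_eq_one_of_mem_Urels :
    ∀ r ∈ Urels, FreeGroup.lift ![permA, permB, permC] r = 1 := by
  simp only [Urels, Set.forall_mem_insert, Set.mem_singleton_iff, forall_eq, map_mul, map_pow,
    map_inv, FreeGroup.lift_apply_of]
  and_intros <;> decide +kernel

/-- The action of `U` on six bits. -/
def sixBitAction : UGroup →* Equiv.Perm SixBits :=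
  PresentedGroup.toGroup lift_perm_eq_one_of_mem_Urels

theorem sixBitAction_Ua : sixBitAction Ua = permA :=
  PresentedGroup.toGroup.of lift_perm_eq_one_of_mem_Urels

theorem sixBitAction_Ub : sixBitAction Ub = permB :=
  PresentedGroup.toGroup.of lift_perm_eq_one_of_mem_Urels

theorem sixBitAction_Uc : sixBitAction Uc = permC :=
  PresentedGroup.toGroup.of lift_perm_eq_one_of_mem_Urels

theorem sixBitAction_Ux : sixBitAction Ux = 1 := by
  rw [Ux, map_pow, map_mul, map_inv, sixBitAction_Ua, sixBitAction_Uc]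
  decide +kernel

theorem sixBitAction_Uy : sixBitAction Uy = 1 := by
  rw [Uy, map_pow, map_mul, map_inv, sixBitAction_Ua, sixBitAction_Uc]
  decide +kernel

theorem normalClosure_Ux_Uy_le_ker_sixBitAction :
    Subgroup.normalClosure {Ux, Uy} ≤ sixBitAction.ker :=
  Subgroup.normalClosure_le_normal <| Set.pair_subset sixBitAction_Ux sixBitAction_Uy

theorem UN_le_normalClosure_Ux_Uy (m : ℕ) : UN m ≤ Subgroup.normalClosure {Ux, Uy} :=
  have Ux_mem : Ux ∈ Subgroup.normalClosure {Ux, Uy} :=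
    Subgroup.subset_normalClosure (Set.mem_insert Ux {Uy})
  have Uy_mem : Uy ∈ Subgroup.normalClosure {Ux, Uy} :=
    Subgroup.subset_normalClosure (Set.mem_insert_of_mem Ux rfl)
  (Subgroup.closure_le _).mpr (Set.pair_subset (pow_mem Ux_mem m) (pow_mem Uy_mem m))

theorem map_chiral_relator_eq_one {H : Type*} [Group H] (φ : UGroup →* H) :
    φ Ua ^ 2 * φ Uc ^ 2 * φ Ub ^ 2 * (φ Ua * φ Uc) ^ 2 = 1 := by
  have relator_eq_one : Ua ^ 2 * Uc ^ 2 * Ub ^ 2 * (Ua * Uc) ^ 2 = 1 :=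
    PresentedGroup.one_of_mem (rels := Urels) (x := FreeGroup.of 0 ^ 2 * FreeGroup.of 2 ^ 2 *
      FreeGroup.of 1 ^ 2 * (FreeGroup.of 0 * FreeGroup.of 2) ^ 2) (by simp [Urels])
  simpa only [map_mul, map_pow, map_one] using congrArg φ relator_eq_one

theorem mirrored_chiral_relator_apply (p q r s t u : ZMod 2) :
    (permA⁻¹ ^ 2 * permC ^ 2 * (permA ^ 2 * permB) ^ 2 * (permA⁻¹ * permC) ^ 2) (p, q, r, s, t, u) =
      (p, q, r, s, t, u + 1) := by
  revert p q r s t u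
  decide +kernel

theorem mirrored_chiral_relator_ne_one :
    permA⁻¹ ^ 2 * permC ^ 2 * (permA ^ 2 * permB) ^ 2 * (permA⁻¹ * permC) ^ 2 ≠ 1 := fun h => by
  have fixed_eq_flipped := mirrored_chiral_relator_apply 0 0 0 0 0 0
  rw [h] at fixed_eq_flipped
  exact absurd fixed_eq_flipped (by decide)

theorem Gm_no_mirror_automorphism_general (N : Subgroup UGroup) [N.Normal]
    (hN : N ≤ Subgroup.normalClosure {Ux, Uy}) :
    ¬ ∃ ρ : UGroup →* UGroup ⧸ N,
        ρ Ua = (QuotientGroup.mk Ua : UGroup ⧸ N)⁻¹ ∧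
        ρ Ub = (QuotientGroup.mk Ua : UGroup ⧸ N) ^ 2 * QuotientGroup.mk Ub ∧
        ρ Uc = (QuotientGroup.mk Uc : UGroup ⧸ N) := by
  rintro ⟨ρ, ha, hb, hc⟩
  let action : UGroup ⧸ N →* Equiv.Perm SixBits :=
    QuotientGroup.lift N sixBitAction (hN.trans normalClosure_Ux_Uy_le_ker_sixBitAction)
  have mirrored_eq_one := map_chiral_relator_eq_one (action.comp ρ)
  simp only [MonoidHom.comp_apply, ha, hb, hc, map_mul, map_pow, map_inv, action,
    QuotientGroup.lift_mk, sixBitAction_Ua, sixBitAction_Ub, sixBitAction_Uc] at mirrored_eq_one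
  exact mirrored_chiral_relator_ne_one mirrored_eq_one

/-- For every positive integer `m`, there is no automorphism `ρ` of `G_m = U / N_m` with
`ρ(ā) = ā⁻¹`, `ρ(b̄) = ā² b̄` and `ρ(c̄) = c̄` (this expresses the chirality of the
polytope `P_m` whose rotation group is `G_m`). -/
theorem Gm_no_mirror_automorphism (m : ℕ) (hm : 0 < m) (hnorm : (UN m).Normal) :
    haveI := hnorm
    ¬ ∃ ρ : (UGroup ⧸ UN m) ≃* (UGroup ⧸ UN m),
        ρ (QuotientGroup.mk Ua) = (QuotientGroup.mk Ua : UGroup ⧸ UN m)⁻¹ ∧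
        ρ (QuotientGroup.mk Ub) =
          (QuotientGroup.mk Ua : UGroup ⧸ UN m) ^ 2 * QuotientGroup.mk Ub ∧
        ρ (QuotientGroup.mk Uc) = (QuotientGroup.mk Uc : UGroup ⧸ UN m) := by
  rintro ⟨ρ, h⟩
  exact Gm_no_mirror_automorphism_general (UN m) (UN_le_normalClosure_Ux_Uy m)
    ⟨ρ.toMonoidHom.comp (QuotientGroup.mk' (UN m)), h⟩
end

section
/- In the group U, the subgroup K = ⟨z, w⟩ generated by z = (bc^{-1})^4 and w = (c^{-1}b)^4 is a normal subgroup of U of index 2048. -/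
/-- The element `z = (bc⁻¹)^4` of `U`. -/
def Uz : UGroup := (Ub * Uc⁻¹) ^ 4

/-- The element `w = (c⁻¹b)^4` of `U`. -/
def Uw : UGroup := (Uc⁻¹ * Ub) ^ 4

/-!
Write `x = a²`, `t = x · bxb⁻¹`, `s = btb⁻¹`, `p = bc⁻¹` and `q = c⁻¹b`. The relations of
`⟨b, c⟩` are those of the plane crystallographic group p4 with commuting translations `p` and `q`.
Conjugation by `a`, `b` and `c` permutes `t`, `s` and their inverses, so `⟨t, s⟩` is normal of order
dividing `8`, and adjoining the involution `x` gives a normal subgroup `X` of order dividing `16`.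
The same generators permute `z`, `w` and their inverses, so `K` is normal, and the successive
indices in `K ≤ KX ≤ KX⟨p, q⟩ ≤ KX⟨p, q, b⟩ ≤ U` divide `16`, `16`, `4` and `2`. Conversely `U` acts
on `(ℤ/4)²` through p4m, with `K` and `X` acting trivially, and on two copies of `(ℤ/4)²`, with `K`
acting trivially but `X` faithfully. The image of the first action has order at least `128`, and
its kernel has an image of order at least `16` under the second.
-/

section SemiconjBy

variable {S : Type*} [Semigroup S] {g h u u' v w y y' : S}

theorem semiconjBy_right_unique [IsRightCancelMul S] (hv : SemiconjBy g u v)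
    (hw : SemiconjBy g u w) : v = w :=
  mul_right_cancel (hv.eq.symm.trans hw.eq)

theorem semiconjBy_of_mul_left [IsRightCancelMul S] (hgh : SemiconjBy (h * g) u w)
    (hg : SemiconjBy g u v) : SemiconjBy h v w :=
  mul_right_cancel (b := g) <| by rw [mul_assoc, ← hg.eq, ← mul_assoc, hgh.eq, mul_assoc]

theorem semiconjBy_of_mul_right [IsLeftCancelMul S] (huy : SemiconjBy g (u * y) (u' * y'))
    (hu : SemiconjBy g u u') : SemiconjBy g y y' :=
  mul_left_cancel (a := u') <| by rw [← mul_assoc, ← hu.eq, mul_assoc, huy.eq, mul_assoc]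

theorem semiconjBy_conj [IsRightCancelMul S] (huvw : SemiconjBy u v w) (hu : SemiconjBy g u u')
    (hv : SemiconjBy g v y) (hw : SemiconjBy g w y') : SemiconjBy u' y y' :=
  semiconjBy_right_unique (hu.mul_right hv) (huvw.eq ▸ hw.mul_right hu)

end SemiconjBy

section Index

open Subgroup

variable {G : Type*} [Group G]

theorem normal_sup_closure_of_conj_mem {S T : Set G} {M : Subgroup G} [M.Normal]
    (hS : Submonoid.closure S = ⊤)
    (hST : ∀ g ∈ S, ∀ t ∈ T, g * t * g⁻¹ ∈ M ⊔ closure T) : (M ⊔ closure T).Normal where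
  conj_mem h hh g := by
    have hg : g ∈ Submonoid.closure S := hS ▸ Submonoid.mem_top g
    induction hg using Submonoid.closure_induction generalizing h with
    | mem g hg =>
      have hle : M ⊔ closure T ≤ (M ⊔ closure T).comap (MulAut.conj g).toMonoidHom :=
        sup_le (fun m hm ↦ mem_sup_left (Normal.conj_mem ‹_› m hm g))
          ((closure_le _).2 (hST g hg))
      exact hle hh
    | one => simpa using hh
    | mul g g' _ _ ihg ihg' => simpa [mul_assoc] using ihg _ (ihg' h hh)

theorem relIndex_sup_zpowers_dvd {M : Subgroup G} [M.Normal] {g : G} {n : ℕ} (h : g ^ n ∈ M) :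
    M.relIndex (M ⊔ zpowers g) ∣ n := by
  have hcard : M.relIndex (zpowers g) = orderOf (g : G ⧸ M) := by
    conv_lhs => rw [← QuotientGroup.ker_mk' M]
    rw [relIndex_ker, MonoidHom.map_zpowers, Nat.card_zpowers, QuotientGroup.mk'_apply]
  rw [relIndex_sup_left, hcard]
  exact orderOf_dvd_of_pow_eq_one ((QuotientGroup.eq_one_iff _).2 h)

theorem card_closure_pair_dvd {g h : G} (hgh : Commute g h) :
    Nat.card (closure {g, h}) ∣ orderOf g * orderOf h := by
  have hcomm (u : zpowers g) (v : zpowers h) : Commute (u : G) v := by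
    obtain ⟨⟨_, m, rfl⟩, ⟨_, n, rfl⟩⟩ := u, v
    exact hgh.zpow_zpow m n
  let f := (zpowers g).subtype.noncommCoprod (zpowers h).subtype hcomm
  have hf : closure {g, h} = f.range := by
    rw [MonoidHom.noncommCoprod_range _ _ hcomm, range_subtype, range_subtype,
      zpowers_eq_closure, zpowers_eq_closure, ← Subgroup.closure_union, Set.singleton_union]
  rw [hf, ← Nat.card_zpowers g, ← Nat.card_zpowers h, ← Nat.card_prod]
  exact card_range_dvd f

theorem relIndex_closure_pair_dvd {M : Subgroup G} [M.Normal] {g h : G} {m n : ℕ}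
    (hgh : Commute g h) (hg : g ^ m ∈ M) (hh : h ^ n ∈ M) :
    M.relIndex (closure {g, h}) ∣ m * n := by
  let π := QuotientGroup.mk' M
  have hcard : M.relIndex (closure {g, h}) = Nat.card (closure {π g, π h}) := by
    conv_lhs => rw [← QuotientGroup.ker_mk' M]
    rw [relIndex_ker, MonoidHom.map_closure, Set.image_pair]
  have horder {u : G} {k : ℕ} (hu : u ^ k ∈ M) : orderOf (π u) ∣ k :=
    orderOf_dvd_of_pow_eq_one ((QuotientGroup.eq_one_iff _).2 hu)
  rw [hcard]
  exact (card_closure_pair_dvd (hgh.map π)).trans (mul_dvd_mul (horder hg) (horder hh))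

theorem card_le_card_map_of_injective {G' ι : Type*} [Group G'] (f : G →* G')
    {H : Subgroup G} [Finite (H.map f)] {F : ι → G} (hF : ∀ i, F i ∈ H)
    (hf : Function.Injective fun i ↦ f (F i)) :
    Nat.card ι ≤ Nat.card (H.map f) :=
  Nat.card_le_card_of_injective (fun i ↦ (⟨f (F i), mem_map_of_mem f (hF i)⟩ : H.map f))
    fun _ _ hij ↦ hf (congrArg Subtype.val hij)

end Index

section WallpaperGroup

variable {G : Type*} [Group G] {b c : G}

theorem inv_sq_of_pow_four_eq_one (hb : b ^ 4 = 1) : b⁻¹ ^ 2 = b ^ 2 := by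
  rw [inv_pow]
  exact inv_eq_of_mul_eq_one_left (by rw [← pow_add, hb])

theorem mul_mul_self_of_sq_eq_one (h : (b * c) ^ 2 = 1) : b * c * b = c⁻¹ :=
  eq_inv_of_mul_eq_one_left (by rwa [mul_assoc _ b c, ← sq])

theorem semiconjBy_mul_inv (hb : b ^ 4 = 1) (hbc : (b * c) ^ 2 = 1) :
    SemiconjBy b (b * c⁻¹) (c⁻¹ * b)⁻¹ := by
  have h : b * c * b = c⁻¹ := mul_mul_self_of_sq_eq_one hbc
  calc b * (b * c⁻¹)
    _ = b ^ 4 * (b⁻¹ * c * b) := by rw [← h]; simp [pow_succ, mul_assoc]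
    _ = (c⁻¹ * b)⁻¹ * b := by rw [hb, one_mul, mul_inv_rev, inv_inv]

theorem commute_mul_inv_inv_mul (hb : b ^ 4 = 1) (hc : c ^ 4 = 1) (hbc : (b * c) ^ 2 = 1) :
    Commute (b * c⁻¹) (c⁻¹ * b) := by
  have h : b * c * b = c⁻¹ := mul_mul_self_of_sq_eq_one hbc
  calc b * c⁻¹ * (c⁻¹ * b)
    _ = b * c⁻¹ * c ^ 4 * (c⁻¹ * b) := by rw [hc, mul_one]
    _ = b * c * b ^ 4 * c * b := by rw [hb]; simp [pow_succ, mul_assoc]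
    _ = b * c * b * b * (b * (b * c * b)) := by simp only [pow_succ, pow_zero, one_mul, mul_assoc]
    _ = c⁻¹ * b * (b * c⁻¹) := by rw [h]

end WallpaperGroup

namespace UGroup

/-! ### Relations in `U` -/

/-- The involution `x = a²`. -/
def Ux : UGroup := Ua ^ 2

/-- The product `t` of the two involutions `x` and `bxb⁻¹`. -/
def Ut : UGroup := Ux * (Ub * Ux * Ub⁻¹)

/-- The conjugate `s = btb⁻¹`, which is the product of `bxb⁻¹` and `b²xb⁻²`. -/
def Us : UGroup := Ub * Ut * Ub⁻¹

/-- The translation `p = bc⁻¹` of the p4 group `⟨b, c⟩`, whose fourth power is `z`. -/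
def Up : UGroup := Ub * Uc⁻¹

/-- The translation `q = c⁻¹b` of the p4 group `⟨b, c⟩`, whose fourth power is `w`. -/
def Uq : UGroup := Uc⁻¹ * Ub

theorem Ua_pow_four : Ua ^ 4 = 1 := PresentedGroup.one_of_mem (by simp [Urels])

theorem Ub_pow_four : Ub ^ 4 = 1 := PresentedGroup.one_of_mem (by simp [Urels])

theorem Uc_pow_four : Uc ^ 4 = 1 := PresentedGroup.one_of_mem (by simp [Urels])

theorem Ua_mul_Ub_sq : (Ua * Ub) ^ 2 = 1 := PresentedGroup.one_of_mem (by simp [Urels])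

theorem Ub_mul_Uc_sq : (Ub * Uc) ^ 2 = 1 := PresentedGroup.one_of_mem (by simp [Urels])

theorem Ux_mul_Ub_sq_pow_four : (Ux * Ub ^ 2) ^ 4 = 1 :=
  PresentedGroup.one_of_mem (by simp [Urels])

theorem Ux_mul_Uc_sq_mul_Ub_sq_mul_sq : Ux * Uc ^ 2 * Ub ^ 2 * (Ua * Uc) ^ 2 = 1 :=
  PresentedGroup.one_of_mem (by simp [Urels])

theorem commutator_mul_Ub_sq : Ua⁻¹ * Uc * Ua * Uc⁻¹ * Ub ^ 2 = 1 :=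
  PresentedGroup.one_of_mem (by simp [Urels])

theorem Ub_inv_sq : Ub⁻¹ ^ 2 = Ub ^ 2 := inv_sq_of_pow_four_eq_one Ub_pow_four

theorem Uc_inv_sq : Uc⁻¹ ^ 2 = Uc ^ 2 := inv_sq_of_pow_four_eq_one Uc_pow_four

theorem Ux_sq : Ux ^ 2 = 1 := by
  rw [Ux, ← pow_mul, Ua_pow_four]

theorem Ux_inv : Ux⁻¹ = Ux :=
  inv_eq_of_mul_eq_one_left (by rw [← sq, Ux_sq])

@[simp]
theorem Ux_mul_cancel_left (g : UGroup) : Ux * (Ux * g) = g := by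
  rw [← mul_assoc, ← sq, Ux_sq, one_mul]

theorem commute_Ua_Ux : Commute Ua Ux := Commute.self_pow Ua 2

theorem Ua_inv_mul_Ua_inv : Ua⁻¹ * Ua⁻¹ = Ux := by
  rw [← Ux_inv, Ux, sq, mul_inv_rev]

theorem semiconjBy_Ua_Ub : SemiconjBy Ua Ub (Ub⁻¹ * Ux) :=
  calc Ua * Ub
    _ = Ua * Ub * Ua * (Ua⁻¹ * Ua⁻¹) * Ua := by simp [mul_assoc]
    _ = Ub⁻¹ * Ux * Ua := by rw [mul_mul_self_of_sq_eq_one Ua_mul_Ub_sq, Ua_inv_mul_Ua_inv]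

theorem semiconjBy_Ua_inv_Ub : SemiconjBy Ua⁻¹ Ub (Ux * Ub⁻¹) := by
  have h : SemiconjBy Ua (Ux * Ub⁻¹) Ub := by
    simpa [Ux_inv] using SemiconjBy.mul_right commute_Ua_Ux semiconjBy_Ua_Ub.inv_right
  exact h.inv_symm_left

theorem semiconjBy_Ua_inv_Uc : SemiconjBy Ua⁻¹ Uc (Ub ^ 2 * Uc) := by
  have h : Ua⁻¹ * Uc * Ua * Uc⁻¹ = Ub ^ 2 := by
    rw [eq_inv_of_mul_eq_one_left commutator_mul_Ub_sq, ← inv_pow, Ub_inv_sq]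
  calc Ua⁻¹ * Uc
    _ = Ua⁻¹ * Uc * Ua * Uc⁻¹ * Uc * Ua⁻¹ := by simp
    _ = Ub ^ 2 * Uc * Ua⁻¹ := by rw [h]

theorem semiconjBy_Ub_Ux : SemiconjBy Ub Ux (Ux * Ut) := by
  simp [SemiconjBy, Ut, mul_assoc]

theorem semiconjBy_Ub_Ut : SemiconjBy Ub Ut Us := by
  simp [SemiconjBy, Us]

theorem Ux_mul_Ub_inv_pow_four : (Ux * Ub⁻¹) ^ 4 = 1 :=
  semiconjBy_right_unique (semiconjBy_Ua_inv_Ub.pow_right 4) (by simp [Ub_pow_four])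

theorem Ub_mul_Ux_pow_four : (Ub * Ux) ^ 4 = 1 := by
  rw [← inv_inj, ← inv_pow, mul_inv_rev, Ux_inv, Ux_mul_Ub_inv_pow_four, inv_one]

theorem semiconjBy_Ub_Us : SemiconjBy Ub Us Ut⁻¹ := by
  have h : Ub * Us * Ub⁻¹ * Ut = 1 :=
    calc Ub * Us * Ub⁻¹ * Ut
      _ = Ub * (Ub * Ux * Ub * Ux * (Ub⁻¹ ^ 2 * Ub⁻¹) * Ux * Ub * Ux) * Ub⁻¹ := by
        simp [Us, Ut, sq, mul_assoc]
      _ = Ub * (Ub * Ux) ^ 4 * Ub⁻¹ := by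
        rw [Ub_inv_sq]; simp [pow_succ, mul_assoc]
      _ = 1 := by rw [Ub_mul_Ux_pow_four, mul_one, mul_inv_cancel]
  rw [← eq_inv_of_mul_eq_one_left h, SemiconjBy, inv_mul_cancel_right]

theorem semiconjBy_Ux_Ut : SemiconjBy Ux Ut Ut⁻¹ := by
  simp [SemiconjBy, Ut, Ux_inv, mul_assoc, ← sq, Ux_sq]

theorem semiconjBy_Ub_sq_Ux : SemiconjBy (Ub ^ 2) Ux (Ux * Ut * Us) := by
  rw [sq]
  exact (semiconjBy_Ub_Ux.mul_right semiconjBy_Ub_Ut).mul_left semiconjBy_Ub_Ux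

theorem semiconjBy_Ub_inv_Ux : SemiconjBy Ub⁻¹ Ux (Ux * Us) := by
  simpa using (semiconjBy_Ub_Ux.mul_right semiconjBy_Ub_Us).inv_symm_left

theorem commute_Ut_Us : Commute Ut Us := by
  have h : SemiconjBy (Ub ^ 2) Ux (Ux * Us * Ut) := by
    have hinv : SemiconjBy (Ub⁻¹ * Ub⁻¹) Ux (Ux * Us * Ut) :=
      (semiconjBy_Ub_inv_Ux.mul_right semiconjBy_Ub_Ut.inv_symm_left).mul_left semiconjBy_Ub_inv_Ux
    rwa [← sq, Ub_inv_sq] at hinv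
  simpa [Commute, SemiconjBy, mul_assoc] using semiconjBy_right_unique semiconjBy_Ub_sq_Ux h

theorem Ut_mul_Us_sq : (Ut * Us) ^ 2 = 1 := by
  have h : (Ux * Ub ^ 2) ^ 2 = Ut * Us :=
    calc (Ux * Ub ^ 2) ^ 2
      _ = Ux * (Ub ^ 2 * Ux) * Ub ^ 2 := by rw [sq]; simp only [mul_assoc]
      _ = Ut * Us * Ub ^ 4 := by rw [semiconjBy_Ub_sq_Ux.eq]; simp [mul_assoc, ← pow_add]
      _ = Ut * Us := by rw [Ub_pow_four, mul_one]
  rw [← h, ← pow_mul, Ux_mul_Ub_sq_pow_four]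

theorem Us_mul_Ut_inv_sq : (Us * Ut⁻¹) ^ 2 = 1 :=
  semiconjBy_right_unique ((semiconjBy_Ub_Ut.mul_right semiconjBy_Ub_Us).pow_right 2)
    (by simp [Ut_mul_Us_sq])

theorem Us_sq : Us ^ 2 = Ut ^ 2 := by
  have h := Us_mul_Ut_inv_sq
  rwa [commute_Ut_Us.symm.inv_right.mul_pow, inv_pow, mul_inv_eq_one] at h

theorem Ut_pow_four : Ut ^ 4 = 1 := by
  have h := Ut_mul_Us_sq
  rwa [commute_Ut_Us.mul_pow, Us_sq, ← pow_add] at h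

theorem Us_pow_four : Us ^ 4 = 1 := by
  rw [pow_mul Us 2 2, Us_sq, ← pow_mul, Ut_pow_four]

-- Since `x = a⁻²`, conjugating `c` twice by `a⁻¹` conjugates it by `x`.
theorem commute_Ux_Ub_mul_Uc : Commute Ux (Ub * Uc) := by
  have h : SemiconjBy (Ua⁻¹ * Ua⁻¹) Uc ((Ux * Ub⁻¹) ^ 2 * (Ub ^ 2 * Uc)) :=
    ((semiconjBy_Ua_inv_Ub.pow_right 2).mul_right semiconjBy_Ua_inv_Uc).mul_left
      semiconjBy_Ua_inv_Uc
  rw [Ua_inv_mul_Ua_inv] at h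
  calc Ux * (Ub * Uc)
    _ = Ux * Ub * Ux * (Ux * Uc) := by simp [mul_assoc]
    _ = Ub * Uc * Ux := by rw [h.eq]; simp [sq, mul_assoc]

theorem semiconjBy_Uc_Ux : SemiconjBy Uc Ux (Ux * Us) := by
  simpa using semiconjBy_Ub_inv_Ux.mul_left commute_Ux_Ub_mul_Uc.symm

theorem Ua_mul_Uc_sq : (Ua * Uc) ^ 2 = Ux * Ub ^ 2 * Uc ^ 2 :=
  calc (Ua * Uc) ^ 2
    _ = Ua * (Uc * Ua) * Uc := by simp only [sq, mul_assoc]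
    _ = Ua * (Ua * (Ub ^ 2 * Uc)) * Uc := by
        rw [(SemiconjBy.inv_symm_left_iff.1 semiconjBy_Ua_inv_Uc).eq]
    _ = Ux * Ub ^ 2 * Uc ^ 2 := by simp only [Ux, sq, mul_assoc]

theorem commute_Ux_Ub_sq_mul_Uc_sq : Commute Ux (Ub ^ 2 * Uc ^ 2) := by
  have hinv : Uc ^ 2 * Ub ^ 2 = (Ub ^ 2 * Uc ^ 2)⁻¹ := by
    rw [mul_inv_rev, ← inv_pow, ← inv_pow, Ub_inv_sq, Uc_inv_sq]
  have h : Ux * (Ub ^ 2 * Uc ^ 2)⁻¹ = (Ux * (Ub ^ 2 * Uc ^ 2))⁻¹ := by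
    rw [← hinv]
    apply eq_inv_of_mul_eq_one_left
    rw [← mul_assoc Ux (Ub ^ 2), ← Ua_mul_Uc_sq, ← mul_assoc, Ux_mul_Uc_sq_mul_Ub_sq_mul_sq]
  rw [mul_inv_rev Ux, Ux_inv] at h
  exact Commute.inv_right_iff.1 h

theorem semiconjBy_Uc_sq_Ux : SemiconjBy (Uc ^ 2) Ux (Ux * Ut * Us) := by
  have h := semiconjBy_Ub_sq_Ux.mul_left commute_Ux_Ub_sq_mul_Uc_sq.symm
  rwa [← mul_assoc, ← pow_add, Ub_pow_four, one_mul] at h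

theorem semiconjBy_Uc_Us : SemiconjBy Uc Us Ut := by
  have h : SemiconjBy Uc (Ux * Us) (Ux * Ut * Us) :=
    semiconjBy_of_mul_left (by rw [← sq]; exact semiconjBy_Uc_sq_Ux) semiconjBy_Uc_Ux
  have h' : Ux * Ut * Us = Ux * Us * Ut := by rw [mul_assoc, commute_Ut_Us.eq, mul_assoc]
  exact semiconjBy_of_mul_right (h' ▸ h) semiconjBy_Uc_Ux

-- Conjugating `commute_Ux_Ub_sq_mul_Uc_sq` by `a⁻¹` gives a new relation, here multiplied by `b`
-- on both sides.
theorem semiconjBy_Ut_inv_mul_Uc_sq : SemiconjBy (Ut⁻¹ * Uc ^ 2) (Ux * Us) (Ux * Ut) := by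
  have hxb : (Ux * Ub⁻¹) ^ 2 = Us * Ub⁻¹ ^ 2 :=
    calc (Ux * Ub⁻¹) ^ 2
      _ = Ux * (Ub⁻¹ * Ux) * Ub⁻¹ := by simp only [sq, mul_assoc]
      _ = Us * Ub⁻¹ ^ 2 := by rw [semiconjBy_Ub_inv_Ux.eq]; simp [sq, mul_assoc]
  have hbc : (Ub ^ 2 * Uc) ^ 2 = Ub * Uc ^ 2 * Ub⁻¹ :=
    calc (Ub ^ 2 * Uc) ^ 2
      _ = Ub * (Ub * Uc * Ub) * (Ub * Uc * Ub) * Ub⁻¹ := by simp [sq, mul_assoc]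
      _ = Ub * Uc⁻¹ ^ 2 * Ub⁻¹ := by
        rw [mul_mul_self_of_sq_eq_one Ub_mul_Uc_sq]; simp only [sq, mul_assoc]
      _ = Ub * Uc ^ 2 * Ub⁻¹ := by rw [Uc_inv_sq]
  have hfactor : Ub * ((Ux * Ub⁻¹) ^ 2 * (Ub ^ 2 * Uc) ^ 2) * Ub = Ut⁻¹ * Uc ^ 2 :=
    calc Ub * ((Ux * Ub⁻¹) ^ 2 * (Ub ^ 2 * Uc) ^ 2) * Ub
      _ = Ub * Us * Ub⁻¹ * Uc ^ 2 := by rw [hxb, hbc]; simp [sq, mul_assoc]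
      _ = Ut⁻¹ * Uc ^ 2 := by rw [semiconjBy_Ub_Us.eq, mul_inv_cancel_right]
  have hx : Commute ((Ux * Ub⁻¹) ^ 2 * (Ub ^ 2 * Uc) ^ 2) Ux :=
    semiconjBy_conj commute_Ux_Ub_sq_mul_Uc_sq.symm
      ((semiconjBy_Ua_inv_Ub.pow_right 2).mul_right (semiconjBy_Ua_inv_Uc.pow_right 2))
      commute_Ua_Ux.inv_left commute_Ua_Ux.inv_left
  rw [← hfactor]
  exact (semiconjBy_Ub_Ux.mul_left hx).mul_left (by simpa using semiconjBy_Ub_inv_Ux.inv_symm_left)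

theorem commute_Uc_sq_Us : Commute (Uc ^ 2) Us := by
  have ht : SemiconjBy Ut (Ux * Ut) (Ux * Ut⁻¹) := by
    rw [SemiconjBy, semiconjBy_Ux_Ut.eq, mul_inv_cancel_left, inv_mul_cancel_right]
  have hxs : SemiconjBy (Uc ^ 2) (Ux * Us) (Ux * Ut⁻¹) := by
    simpa using ht.mul_left semiconjBy_Ut_inv_mul_Uc_sq
  have hs : (Ux * Ut * Us)⁻¹ * (Ux * Ut⁻¹) = Us :=
    calc (Ux * Ut * Us)⁻¹ * (Ux * Ut⁻¹)
      _ = (Ut ^ 2 * Us)⁻¹ := by simp [sq, mul_assoc]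
      _ = Us := by
        rw [← Us_sq, ← pow_succ]
        exact inv_eq_of_mul_eq_one_left (by rw [← pow_succ', Us_pow_four])
  have h := semiconjBy_Uc_sq_Ux.inv_right.mul_right hxs
  rwa [hs, inv_mul_cancel_left] at h

theorem semiconjBy_Uc_Ut : SemiconjBy Uc Ut Us :=
  semiconjBy_of_mul_left (by rw [← sq]; exact commute_Uc_sq_Us) semiconjBy_Uc_Us

theorem semiconjBy_Ua_Ut : SemiconjBy Ua Ut Us := by
  have h : SemiconjBy Ua Ut (Ux * (Ub⁻¹ * Ux * Ux * (Ub⁻¹ * Ux)⁻¹)) :=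
    SemiconjBy.mul_right commute_Ua_Ux
      ((semiconjBy_Ua_Ub.mul_right commute_Ua_Ux).mul_right semiconjBy_Ua_Ub.inv_right)
  have h' : Ux * (Ub⁻¹ * Ux * Ux * (Ub⁻¹ * Ux)⁻¹) = Us :=
    calc Ux * (Ub⁻¹ * Ux * Ux * (Ub⁻¹ * Ux)⁻¹)
      _ = Ux * (Ub⁻¹ * Ux * Ub) := by simp [mul_assoc]
      _ = Us := by rw [semiconjBy_Ub_inv_Ux.eq]; simp [mul_assoc]
  rwa [h'] at h

theorem semiconjBy_Ua_Us : SemiconjBy Ua Us Ut⁻¹ :=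
  semiconjBy_of_mul_left (by rw [← sq]; exact semiconjBy_Ux_Ut) semiconjBy_Ua_Ut

theorem semiconjBy_Ub_Uq : SemiconjBy Ub Uq Up := by
  simp [SemiconjBy, Up, Uq, mul_assoc]

theorem semiconjBy_Ub_Up : SemiconjBy Ub Up Uq⁻¹ :=
  semiconjBy_mul_inv Ub_pow_four Ub_mul_Uc_sq

theorem commute_Up_Uq : Commute Up Uq :=
  commute_mul_inv_inv_mul Ub_pow_four Uc_pow_four Ub_mul_Uc_sq

theorem Uc_eq_Up_inv_mul_Ub : Uc = Up⁻¹ * Ub := by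
  simp [Up]

theorem semiconjBy_Uc_Up : SemiconjBy Uc Up Uq⁻¹ :=
  Uc_eq_Up_inv_mul_Ub ▸ SemiconjBy.mul_left commute_Up_Uq.inv_inv semiconjBy_Ub_Up

theorem semiconjBy_Uc_Uq : SemiconjBy Uc Uq Up :=
  Uc_eq_Up_inv_mul_Ub ▸ SemiconjBy.mul_left (Commute.refl Up).inv_left semiconjBy_Ub_Uq

theorem semiconjBy_Up_Ux : SemiconjBy Up Ux (Ux * Ut * Us⁻¹) := by
  have h : SemiconjBy Uc⁻¹ Ux (Ux * Ut⁻¹) := by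
    simpa using (semiconjBy_Uc_Ux.mul_right semiconjBy_Uc_Ut.inv_right).inv_symm_left
  exact (semiconjBy_Ub_Ux.mul_right semiconjBy_Ub_Ut.inv_right).mul_left h

theorem semiconjBy_Up_Ut : SemiconjBy Up Ut Ut⁻¹ :=
  semiconjBy_Ub_Us.mul_left semiconjBy_Uc_Us.inv_symm_left

theorem commute_Up_Us : Commute Up Us :=
  semiconjBy_Ub_Ut.mul_left semiconjBy_Uc_Ut.inv_symm_left

theorem Ux_mul_Up_pow_four : (Ux * Up) ^ 4 = Up ^ 4 := by
  have hsq : (Ux * Up) ^ 2 = Ut * Us⁻¹ * Up ^ 2 :=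
    calc (Ux * Up) ^ 2
      _ = Ux * (Up * Ux) * Up := by simp only [sq, mul_assoc]
      _ = Ut * Us⁻¹ * Up ^ 2 := by rw [semiconjBy_Up_Ux.eq]; simp [sq, mul_assoc]
  have hcomm : Commute (Ut * Us⁻¹) (Up ^ 2) := by
    have ht : Commute (Up ^ 2) Ut := by
      simpa [sq, Commute] using semiconjBy_Up_Ut.inv_right.mul_left semiconjBy_Up_Ut
    exact ht.symm.mul_left (commute_Up_Us.pow_left 2).symm.inv_left
  have hone : (Ut * Us⁻¹) ^ 2 = 1 := by
    rw [commute_Ut_Us.inv_right.mul_pow, inv_pow, Us_sq, mul_inv_cancel]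
  rw [pow_mul _ 2 2, hsq, hcomm.mul_pow, hone, one_mul, ← pow_mul]

theorem semiconjBy_Ua_Up : SemiconjBy Ua Up (Ux * Up)⁻¹ := by
  have hp : Ux * Ub⁻¹ * (Ub ^ 2 * Uc)⁻¹ = Ux * Up⁻¹ := by
    rw [mul_inv_rev, ← mul_mul_self_of_sq_eq_one Ub_mul_Uc_sq]
    simp [Up, sq, mul_assoc]
  have h : SemiconjBy Ua (Ux * Up⁻¹) Up := by
    rw [← hp]
    exact (semiconjBy_Ua_inv_Ub.mul_right semiconjBy_Ua_inv_Uc.inv_right).inv_symm_left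
  simpa using (SemiconjBy.mul_right commute_Ua_Ux h).inv_right

theorem semiconjBy_Ua_Uq : SemiconjBy Ua Uq (Ux * Uq * Ut⁻¹) := by
  have h : SemiconjBy Ua (Ub⁻¹ * Up * Ub) ((Ub⁻¹ * Ux)⁻¹ * (Ux * Up)⁻¹ * (Ub⁻¹ * Ux)) :=
    (semiconjBy_Ua_Ub.inv_right.mul_right semiconjBy_Ua_Up).mul_right semiconjBy_Ua_Ub
  have hq : Ub⁻¹ * Up * Ub = Uq := by
    rw [semiconjBy_Ub_Uq.inv_symm_left.eq, inv_mul_cancel_right]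
  have hq' : (Ub⁻¹ * Ux)⁻¹ * (Ux * Up)⁻¹ * (Ub⁻¹ * Ux) = Ux * Uq * Ut⁻¹ :=
    calc (Ub⁻¹ * Ux)⁻¹ * (Ux * Up)⁻¹ * (Ub⁻¹ * Ux)
      _ = Ux * (Ub * Up⁻¹) * (Ux * Ub⁻¹ * Ux) := by simp [Ux_inv, mul_assoc]
      _ = Ux * Uq * (Ub * Ux * Ub⁻¹ * Ux) := by
        rw [semiconjBy_Ub_Up.inv_right.eq, inv_inv]; simp only [mul_assoc]
      _ = Ux * Uq * Ut⁻¹ := by simp [Ut, Ux_inv, mul_assoc]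
  rwa [hq, hq'] at h

theorem semiconjBy_Ub_Uz : SemiconjBy Ub Uz Uw⁻¹ := by
  have h := semiconjBy_Ub_Up.pow_right 4
  rwa [inv_pow] at h

theorem semiconjBy_Ub_Uw : SemiconjBy Ub Uw Uz :=
  semiconjBy_Ub_Uq.pow_right 4

theorem semiconjBy_Uc_Uz : SemiconjBy Uc Uz Uw⁻¹ := by
  have h := semiconjBy_Uc_Up.pow_right 4
  rwa [inv_pow] at h

theorem semiconjBy_Uc_Uw : SemiconjBy Uc Uw Uz :=
  semiconjBy_Uc_Uq.pow_right 4

theorem semiconjBy_Ua_Uz : SemiconjBy Ua Uz Uz⁻¹ := by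
  have h := semiconjBy_Ua_Up.pow_right 4
  rwa [inv_pow, Ux_mul_Up_pow_four] at h

theorem commute_Ua_Uw : Commute Ua Uw := by
  have hxz : Commute Ux Uz := by
    have h := semiconjBy_Ua_Uz.inv_right.mul_left semiconjBy_Ua_Uz
    rwa [inv_inv, ← sq] at h
  have hz : SemiconjBy (Ub⁻¹ * Ux) Uz Uw := semiconjBy_Ub_Uw.inv_symm_left.mul_left hxz
  have hw : SemiconjBy (Ub⁻¹ * Ux) Uz⁻¹ (Ua * Uw⁻¹ * Ua⁻¹) :=
    semiconjBy_conj semiconjBy_Ub_Uz semiconjBy_Ua_Ub semiconjBy_Ua_Uz (SemiconjBy.conj_mk _ _)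
  have h := SemiconjBy.conj_mk Ua Uw⁻¹
  rw [semiconjBy_right_unique hw hz.inv_right] at h
  exact Commute.inv_right_iff.1 h

open Subgroup

/-! ### The upper bound for the index -/

/-- The subgroup `K = ⟨z, w⟩`. -/
def UK : Subgroup UGroup := closure {Uz, Uw}

/-- The subgroup `⟨t, s⟩`, an abelian normal subgroup of index at most `2` in `sqClosure`. -/
def sqTranslations : Subgroup UGroup := closure {Ut, Us}

/-- The normal closure `X = ⟨t, s, x⟩` of `x = a²`. -/
def sqClosure : Subgroup UGroup := sqTranslations ⊔ zpowers Ux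

/-- The subgroup `KX⟨p, q⟩`, which maps onto the translations of the p4m group `U / X`. -/
def translationClosure : Subgroup UGroup := UK ⊔ sqClosure ⊔ closure {Up, Uq}

/-- The subgroup `KX⟨p, q, b⟩`, which maps onto the rotations and translations of `U / X`. -/
def rotationClosure : Subgroup UGroup := translationClosure ⊔ zpowers Ub

theorem closure_Ua_Ub_Uc : closure {Ua, Ub, Uc} = ⊤ := by
  rw [eq_top_iff, ← PresentedGroup.closure_range_of, closure_le]
  rintro _ ⟨i, rfl⟩
  apply Subgroup.subset_closure
  fin_cases i <;> simp [Ua, Ub, Uc]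

theorem sup_closure_normal_of_semiconjBy {M : Subgroup UGroup} [M.Normal] {T : Set UGroup}
    (ha : ∀ g ∈ T, ∃ h ∈ M ⊔ closure T, SemiconjBy Ua g h)
    (hb : ∀ g ∈ T, ∃ h ∈ M ⊔ closure T, SemiconjBy Ub g h)
    (hc : ∀ g ∈ T, ∃ h ∈ M ⊔ closure T, SemiconjBy Uc g h) : (M ⊔ closure T).Normal := by
  have hfin : ∀ g ∈ ({Ua, Ub, Uc} : Set UGroup), IsOfFinOrder g := by
    rintro g (rfl | rfl | rfl) <;> refine isOfFinOrder_iff_pow_eq_one.2 ⟨4, by decide, ?_⟩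
    exacts [Ua_pow_four, Ub_pow_four, Uc_pow_four]
  have hgen : Submonoid.closure {Ua, Ub, Uc} = ⊤ := by
    rw [← closure_toSubmonoid_of_isOfFinOrder hfin, closure_Ua_Ub_Uc, top_toSubmonoid]
  have hconj {g t : UGroup} (h : ∃ y ∈ M ⊔ closure T, SemiconjBy g t y) :
      g * t * g⁻¹ ∈ M ⊔ closure T := by
    obtain ⟨y, hy, hgt⟩ := h
    rwa [hgt.eq, mul_inv_cancel_right]
  refine normal_sup_closure_of_conj_mem hgen ?_
  rintro g (rfl | rfl | rfl) t ht
  exacts [hconj (ha t ht), hconj (hb t ht), hconj (hc t ht)]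

theorem closure_normal_of_semiconjBy {T : Set UGroup}
    (ha : ∀ g ∈ T, ∃ h ∈ closure T, SemiconjBy Ua g h)
    (hb : ∀ g ∈ T, ∃ h ∈ closure T, SemiconjBy Ub g h)
    (hc : ∀ g ∈ T, ∃ h ∈ closure T, SemiconjBy Uc g h) : (closure T).Normal := by
  rw [← bot_sup_eq (closure T)] at *
  exact sup_closure_normal_of_semiconjBy ha hb hc

theorem sup_zpowers_normal_of_semiconjBy {M : Subgroup UGroup} [M.Normal] {g : UGroup}
    (ha : ∃ h ∈ M ⊔ zpowers g, SemiconjBy Ua g h) (hb : ∃ h ∈ M ⊔ zpowers g, SemiconjBy Ub g h)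
    (hc : ∃ h ∈ M ⊔ zpowers g, SemiconjBy Uc g h) : (M ⊔ zpowers g).Normal := by
  rw [zpowers_eq_closure] at *
  exact sup_closure_normal_of_semiconjBy (by simpa using ha) (by simpa using hb) (by simpa using hc)

theorem Uz_mem_UK : Uz ∈ UK := Subgroup.subset_closure (by simp)

theorem Uw_mem_UK : Uw ∈ UK := Subgroup.subset_closure (by simp)

instance UK_normal : UK.Normal := by
  have hz := Uz_mem_UK
  have hw := Uw_mem_UK
  refine closure_normal_of_semiconjBy ?_ ?_ ?_ <;> rintro g (rfl | rfl)
  exacts [⟨_, inv_mem hz, semiconjBy_Ua_Uz⟩, ⟨_, hw, commute_Ua_Uw⟩,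
    ⟨_, inv_mem hw, semiconjBy_Ub_Uz⟩, ⟨_, hz, semiconjBy_Ub_Uw⟩,
    ⟨_, inv_mem hw, semiconjBy_Uc_Uz⟩, ⟨_, hz, semiconjBy_Uc_Uw⟩]

theorem Ut_mem_sqTranslations : Ut ∈ sqTranslations := Subgroup.subset_closure (by simp)

theorem Us_mem_sqTranslations : Us ∈ sqTranslations := Subgroup.subset_closure (by simp)

instance sqTranslations_normal : sqTranslations.Normal := by
  have ht := Ut_mem_sqTranslations
  have hs := Us_mem_sqTranslations
  refine closure_normal_of_semiconjBy ?_ ?_ ?_ <;> rintro g (rfl | rfl)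
  exacts [⟨_, hs, semiconjBy_Ua_Ut⟩, ⟨_, inv_mem ht, semiconjBy_Ua_Us⟩,
    ⟨_, hs, semiconjBy_Ub_Ut⟩, ⟨_, inv_mem ht, semiconjBy_Ub_Us⟩,
    ⟨_, hs, semiconjBy_Uc_Ut⟩, ⟨_, ht, semiconjBy_Uc_Us⟩]

theorem Ux_mem_sqClosure : Ux ∈ sqClosure := mem_sup_right (mem_zpowers Ux)

instance sqClosure_normal : sqClosure.Normal := by
  have hx := Ux_mem_sqClosure
  exact sup_zpowers_normal_of_semiconjBy ⟨_, hx, commute_Ua_Ux⟩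
    ⟨_, mul_mem hx (mem_sup_left Ut_mem_sqTranslations), semiconjBy_Ub_Ux⟩
    ⟨_, mul_mem hx (mem_sup_left Us_mem_sqTranslations), semiconjBy_Uc_Ux⟩

theorem card_sqTranslations_dvd : Nat.card sqTranslations ∣ 8 := by
  have hclosure : sqTranslations = closure {Ut, Us * Ut⁻¹} := by
    apply le_antisymm <;> rw [sqTranslations, closure_le, Set.pair_subset_iff]
    · have ht : Ut ∈ closure {Ut, Us * Ut⁻¹} := Subgroup.subset_closure (by simp)
      have hst : Us * Ut⁻¹ ∈ closure {Ut, Us * Ut⁻¹} := Subgroup.subset_closure (by simp)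
      exact ⟨ht, by simpa using mul_mem hst ht⟩
    · exact ⟨Ut_mem_sqTranslations, mul_mem Us_mem_sqTranslations (inv_mem Ut_mem_sqTranslations)⟩
  have hcomm : Commute Ut (Us * Ut⁻¹) := commute_Ut_Us.mul_right (Commute.refl Ut).inv_right
  rw [hclosure]
  exact (card_closure_pair_dvd hcomm).trans (mul_dvd_mul (orderOf_dvd_of_pow_eq_one Ut_pow_four)
    (orderOf_dvd_of_pow_eq_one Us_mul_Ut_inv_sq))

theorem card_sqClosure_dvd : Nat.card sqClosure ∣ 16 := by
  have hx : Ux ^ 2 ∈ sqTranslations := Ux_sq ▸ one_mem _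
  rw [← relIndex_bot_left, ← relIndex_mul_relIndex ⊥ sqTranslations sqClosure bot_le le_sup_left,
    relIndex_bot_left]
  exact mul_dvd_mul card_sqTranslations_dvd (relIndex_sup_zpowers_dvd hx)

theorem sup_le_translationClosure : UK ⊔ sqClosure ≤ translationClosure := le_sup_left

theorem sqClosure_le_translationClosure : sqClosure ≤ translationClosure :=
  le_sup_right.trans sup_le_translationClosure

theorem Up_mem_translationClosure : Up ∈ translationClosure :=
  mem_sup_right (Subgroup.subset_closure (Set.mem_insert Up {Uq}))

theorem Uq_mem_translationClosure : Uq ∈ translationClosure :=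
  mem_sup_right (Subgroup.subset_closure (Set.mem_insert_of_mem Up rfl))

instance translationClosure_normal : translationClosure.Normal := by
  have hx : Ux ∈ translationClosure := sqClosure_le_translationClosure Ux_mem_sqClosure
  have ht : Ut ∈ translationClosure :=
    sqClosure_le_translationClosure (mem_sup_left Ut_mem_sqTranslations)
  have hp := Up_mem_translationClosure
  have hq := Uq_mem_translationClosure
  refine sup_closure_normal_of_semiconjBy ?_ ?_ ?_ <;> rintro g (rfl | rfl)
  exacts [⟨_, inv_mem (mul_mem hx hp), semiconjBy_Ua_Up⟩,
    ⟨_, mul_mem (mul_mem hx hq) (inv_mem ht), semiconjBy_Ua_Uq⟩,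
    ⟨_, inv_mem hq, semiconjBy_Ub_Up⟩, ⟨_, hp, semiconjBy_Ub_Uq⟩,
    ⟨_, inv_mem hq, semiconjBy_Uc_Up⟩, ⟨_, hp, semiconjBy_Uc_Uq⟩]

theorem translationClosure_le_rotationClosure : translationClosure ≤ rotationClosure :=
  le_sup_left

theorem Ub_mem_rotationClosure : Ub ∈ rotationClosure := mem_sup_right (mem_zpowers Ub)

theorem Uc_mem_rotationClosure : Uc ∈ rotationClosure := by
  rw [Uc_eq_Up_inv_mul_Ub]
  exact mul_mem (inv_mem (translationClosure_le_rotationClosure Up_mem_translationClosure))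
    Ub_mem_rotationClosure

theorem Ux_mem_rotationClosure : Ux ∈ rotationClosure :=
  translationClosure_le_rotationClosure (sqClosure_le_translationClosure Ux_mem_sqClosure)

instance rotationClosure_normal : rotationClosure.Normal := by
  have hb := Ub_mem_rotationClosure
  have hc := Uc_mem_rotationClosure
  exact sup_zpowers_normal_of_semiconjBy
    ⟨_, mul_mem (inv_mem hb) Ux_mem_rotationClosure, semiconjBy_Ua_Ub⟩ ⟨_, hb, Commute.refl Ub⟩
    ⟨_, mul_mem (mul_mem hc hb) (inv_mem hc), SemiconjBy.conj_mk Uc Ub⟩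

theorem rotationClosure_sup_zpowers_Ua : rotationClosure ⊔ zpowers Ua = ⊤ := by
  rw [eq_top_iff, ← closure_Ua_Ub_Uc, closure_le]
  rintro g (rfl | rfl | rfl)
  exacts [mem_sup_right (mem_zpowers Ua), mem_sup_left Ub_mem_rotationClosure,
    mem_sup_left Uc_mem_rotationClosure]

theorem UK_relIndex_sup_dvd : UK.relIndex (UK ⊔ sqClosure) ∣ 16 := by
  rw [relIndex_sup_left]
  exact (relIndex_dvd_card UK sqClosure).trans card_sqClosure_dvd

theorem sup_relIndex_translationClosure_dvd :
    (UK ⊔ sqClosure).relIndex translationClosure ∣ 16 := by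
  have hz : Up ^ 4 ∈ UK ⊔ sqClosure := mem_sup_left Uz_mem_UK
  have hw : Uq ^ 4 ∈ UK ⊔ sqClosure := mem_sup_left Uw_mem_UK
  rw [translationClosure, relIndex_sup_left]
  exact relIndex_closure_pair_dvd commute_Up_Uq hz hw

theorem translationClosure_relIndex_rotationClosure_dvd :
    translationClosure.relIndex rotationClosure ∣ 4 :=
  relIndex_sup_zpowers_dvd (Ub_pow_four ▸ one_mem _)

theorem rotationClosure_index_dvd : rotationClosure.index ∣ 2 := by
  rw [← relIndex_top_right, ← rotationClosure_sup_zpowers_Ua]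
  exact relIndex_sup_zpowers_dvd Ux_mem_rotationClosure

theorem UK_index_dvd : UK.index ∣ 2048 := by
  rw [← relIndex_mul_index (le_sup_left : UK ≤ UK ⊔ sqClosure),
    ← relIndex_mul_index sup_le_translationClosure,
    ← relIndex_mul_index translationClosure_le_rotationClosure]
  exact mul_dvd_mul UK_relIndex_sup_dvd (mul_dvd_mul sup_relIndex_translationClosure_dvd
    (mul_dvd_mul translationClosure_relIndex_rotationClosure_dvd rotationClosure_index_dvd))

/-! ### The lower bound for the index -/

/-- The lattice `ℤ²` modulo `4`. -/
abbrev Grid : Type := ZMod 4 × ZMod 4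

/-- The rotation of the grid by a quarter turn about the origin. -/
def quarterTurn : Equiv.Perm Grid where
  toFun v := (-v.2, v.1)
  invFun v := (v.2, -v.1)
  left_inv _ := by simp
  right_inv _ := by simp

/-- The reflection of the grid in the second axis. -/
def reflection : Equiv.Perm Grid where
  toFun v := (-v.1, v.2)
  invFun v := (-v.1, v.2)
  left_inv _ := by simp
  right_inv _ := by simp

/-- The reflection of the grid in the first axis, followed on the points with odd coordinate sum
by the translation by `(-1, -1)`. In `ZMod 4` the square `(v.1 + v.2) ^ 2` is `0` or `1` according
to the parity of the coordinate sum. -/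
def parityReflection : Equiv.Perm Grid where
  toFun v := (v.1 - (v.1 + v.2) ^ 2, -v.2 - (v.1 + v.2) ^ 2)
  invFun v := (v.1 + (v.1 + v.2) ^ 2, -v.2 - (v.1 + v.2) ^ 2)
  left_inv := by decide
  right_inv := by decide

theorem forall_Urels_lift_eq_one_iff {G : Type*} [Group G] (f : Fin 3 → G) :
    (∀ r ∈ Urels, FreeGroup.lift f r = 1) ↔
      f 0 ^ 4 = 1 ∧ f 1 ^ 4 = 1 ∧ f 2 ^ 4 = 1 ∧ (f 0 * f 1) ^ 2 = 1 ∧ (f 1 * f 2) ^ 2 = 1 ∧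
      (f 0 * f 1 * f 2) ^ 2 = 1 ∧ (f 0 ^ 2 * f 1 ^ 2) ^ 4 = 1 ∧
      f 0 ^ 2 * f 2 ^ 2 * f 1 ^ 2 * (f 0 * f 2) ^ 2 = 1 ∧
      (f 0)⁻¹ * f 2 * f 0 * (f 2)⁻¹ * f 1 ^ 2 = 1 := by
  simp [Urels]

/-- The action of `U` on the grid through the plane crystallographic group p4m modulo `4`: `a` is a
reflection, and `b` and `c` are quarter turns about different centres. -/
def gridAction : UGroup →* Equiv.Perm Grid :=
  PresentedGroup.toGroup (f := ![reflection, quarterTurn,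
    Equiv.subRight ((1, 0) : Grid) * quarterTurn]) <| by
    rw [forall_Urels_lift_eq_one_iff]
    decide +kernel

/-- The action of `U` on two copies of the grid modelled on the cosets of `⟨b, c⟩`: each copy stands
for the sixteen elements of `sqClosure`, and `a` exchanges the two copies. -/
def doubleGridAction : UGroup →* Equiv.Perm (Grid ⊕ Grid) :=
  PresentedGroup.toGroup (f :=
    ![Equiv.sumComm _ _ * Equiv.sumCongr 1 (Equiv.subLeft ((1, 0) : Grid)),
      Equiv.sumCongr quarterTurn (Equiv.addLeft ((1, 0) : Grid) * quarterTurn),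
      Equiv.sumCongr parityReflection (Equiv.neg Grid * parityReflection)]) <| by
    rw [forall_Urels_lift_eq_one_iff]
    refine ⟨?_, ?_, ?_, ?_, ?_, ?_, ?_, ?_, ?_⟩ <;> decide +kernel

theorem UK_le_ker_gridAction : UK ≤ gridAction.ker := by
  rw [UK, closure_le, Set.pair_subset_iff]
  constructor <;> rw [SetLike.mem_coe, MonoidHom.mem_ker] <;> decide +kernel

theorem UK_le_ker_doubleGridAction : UK ≤ doubleGridAction.ker := by
  rw [UK, closure_le, Set.pair_subset_iff]
  constructor <;> rw [SetLike.mem_coe, MonoidHom.mem_ker] <;> decide +kernel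

theorem gridAction_injective : Function.Injective fun i : Fin 4 × Fin 4 × Fin 4 × Fin 2 ↦
    gridAction (Up ^ (i.1 : ℕ) * Uq ^ (i.2.1 : ℕ) * Ub ^ (i.2.2.1 : ℕ) * Ua ^ (i.2.2.2 : ℕ)) := by
  decide +kernel

theorem doubleGridAction_injective : Function.Injective fun i : Fin 2 × Fin 4 × Fin 2 ↦
    doubleGridAction (Ux ^ (i.1 : ℕ) * Ut ^ (i.2.1 : ℕ) * Us ^ (i.2.2 : ℕ)) := by
  decide +kernel

theorem le_index_ker_gridAction : 128 ≤ gridAction.ker.index := by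
  rw [index_ker, MonoidHom.range_eq_map]
  simpa using card_le_card_map_of_injective gridAction (fun _ ↦ mem_top _) gridAction_injective

theorem sqClosure_le_ker_gridAction : sqClosure ≤ gridAction.ker := by
  have hx : gridAction Ux = 1 := by decide +kernel
  have ht : gridAction Ut = 1 := by simp [Ut, hx]
  have hs : gridAction Us = 1 := by simp [Us, ht]
  simp [sqClosure, sqTranslations, Set.pair_subset_iff, MonoidHom.mem_ker, hx, ht, hs]

theorem le_relIndex_ker_doubleGridAction :
    16 ≤ doubleGridAction.ker.relIndex gridAction.ker := by
  have hmem (i : Fin 2 × Fin 4 × Fin 2) :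
      Ux ^ (i.1 : ℕ) * Ut ^ (i.2.1 : ℕ) * Us ^ (i.2.2 : ℕ) ∈ gridAction.ker :=
    sqClosure_le_ker_gridAction <| mul_mem (mul_mem (pow_mem Ux_mem_sqClosure _)
      (pow_mem (mem_sup_left Ut_mem_sqTranslations) _))
      (pow_mem (mem_sup_left Us_mem_sqTranslations) _)
  rw [relIndex_ker]
  simpa using card_le_card_map_of_injective doubleGridAction hmem doubleGridAction_injective

theorem UK_index : UK.index = 2048 := by
  have hle : UK ≤ doubleGridAction.ker ⊓ gridAction.ker :=
    le_inf UK_le_ker_doubleGridAction UK_le_ker_gridAction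
  have hker : 16 * 128 ≤ (doubleGridAction.ker ⊓ gridAction.ker).index := by
    rw [← relIndex_top_right, ← relIndex_inf_mul_relIndex, inf_top_eq, relIndex_top_right]
    exact Nat.mul_le_mul le_relIndex_ker_doubleGridAction le_index_ker_gridAction
  have hpos : 0 < UK.index := Nat.pos_of_dvd_of_pos UK_index_dvd (by decide)
  exact (Nat.le_of_dvd (by decide) UK_index_dvd).antisymm
    (hker.trans (Nat.le_of_dvd hpos (index_dvd_of_le hle)))

end UGroup

/-- The subgroup `K = ⟨z, w⟩` of `U` is normal of index `2048`. -/
theorem K_normal_index_2048 :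
    (Subgroup.closure {Uz, Uw} : Subgroup UGroup).Normal ∧
    (Subgroup.closure {Uz, Uw} : Subgroup UGroup).index = 2048 :=
  ⟨UGroup.UK_normal, UGroup.UK_index⟩
end
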